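/- arXiv:1506.08851 — 9 statements merged into one kernel-verified Lean document; each statement's English description precedes it below -/
import Mathlib

section
/- Let X be a real Hilbert space and A : X × X → ℝ strongly monotone with constant c0 > 0 and Lipschitz continuous with constant L ≥ c0. Suppose u, v, u', v' ∈ X satisfy (u', w)_X = (u, w)_X − (c0/L²)·A(u,w) for all w ∈ X and (v', w)_X = (v, w)_X − (c0/L²)·A(v,w) for all w ∈ X. Then ‖u' − v'‖_X ≤ k‖u − v‖_X, where k = √(1 − (c0/L)²); i.e., the fixed point map is a contraction with constant k. -/
/-! Write `d = u - v`, `e = u' - v'`, `t = c0/L²` and `g = d - e`. Subtracting the two defining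
identities, `g` is the Riesz representative of `t (A(u,·) - A(v,·))`. Lipschitz continuity gives
`‖g‖ ≤ t L ‖d‖`, strong monotonicity gives `⟪g, d⟫ ≥ t c0 ‖d‖²`, and expanding `‖d - g‖²` yields
`‖e‖² ≤ (1 - 2 t c0 + t² L²) ‖d‖²`. The choice `t = c0/L²` minimises the factor, with
value `1 - (c0/L)²`. -/

open scoped RealInnerProductSpace

/-- The fixed point map `u ↦ u'`, defined by `(u', w) = (u, w) - (c0/L²)·A(u, w)` for all
`w ∈ X`, is a contraction with constant `k = √(1 - (c0/L)²)`. -/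
theorem fixed_point_map_contraction
    {X : Type*} [NormedAddCommGroup X] [InnerProductSpace ℝ X] [CompleteSpace X]
    (A : X → X → ℝ)
    (hlin : ∀ u : X, IsBoundedLinearMap ℝ (fun v => A u v))
    (c0 L : ℝ) (hc0 : 0 < c0) (hL : c0 ≤ L)
    (hmono : ∀ u v : X, A u (u - v) - A v (u - v) ≥ c0 * ‖u - v‖ ^ 2)
    (hlip : ∀ u v w : X, |A u w - A v w| ≤ L * ‖u - v‖ * ‖w‖)
    (u v u' v' : X)
    (hu' : ∀ w : X, ⟪u', w⟫ = ⟪u, w⟫ - (c0 / L ^ 2) * A u w)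
    (hv' : ∀ w : X, ⟪v', w⟫ = ⟪v, w⟫ - (c0 / L ^ 2) * A v w) :
    ‖u' - v'‖ ≤ Real.sqrt (1 - (c0 / L) ^ 2) * ‖u - v‖ := by
  have hLpos : 0 < L := hc0.trans_le hL
  have ht : 0 < c0 / L ^ 2 := by positivity
  have htL : c0 / L ^ 2 * L ^ 2 = c0 := by field_simp
  have hk : (c0 / L) ^ 2 = c0 / L ^ 2 * c0 := by field_simp
  rw [hk]
  generalize c0 / L ^ 2 = t at *
  obtain ⟨g, hg⟩ : ∃ g, g = (u - v) - (u' - v') := ⟨_, rfl⟩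
  have hgw : ∀ w : X, ⟪g, w⟫ = t * (A u w - A v w) := by
    intro w
    rw [hg, inner_sub_left, inner_sub_left, inner_sub_left, hu', hv']
    ring
  have hge : u' - v' = (u - v) - g := by rw [hg]; abel
  have hnorm : ‖g‖ ≤ t * L * ‖u - v‖ := by
    -- Test the identity for `g` with `w = g` and cancel one factor `‖g‖`.
    rcases (norm_nonneg g).eq_or_lt with h0 | hpos
    · rw [← h0]; positivity
    · refine le_of_mul_le_mul_right ?_ hpos
      calc ‖g‖ * ‖g‖ = t * (A u g - A v g) := by
            rw [← hgw, real_inner_self_eq_norm_mul_norm]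
        _ ≤ t * (L * ‖u - v‖ * ‖g‖) := by
            gcongr
            exact (le_abs_self _).trans (hlip u v g)
        _ = t * L * ‖u - v‖ * ‖g‖ := by ring
  have hsq : ‖g‖ ^ 2 ≤ t * c0 * ‖u - v‖ ^ 2 := by
    calc ‖g‖ ^ 2 ≤ (t * L * ‖u - v‖) ^ 2 := by gcongr
      _ = t * (t * L ^ 2) * ‖u - v‖ ^ 2 := by ring
      _ = t * c0 * ‖u - v‖ ^ 2 := by rw [htL]
  have hinner : t * (c0 * ‖u - v‖ ^ 2) ≤ ⟪u - v, g⟫ := by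
    rw [real_inner_comm, hgw]
    exact mul_le_mul_of_nonneg_left (hmono u v) ht.le
  have hmain : ‖u' - v'‖ ^ 2 ≤ (1 - t * c0) * ‖u - v‖ ^ 2 := by
    rw [hge, norm_sub_sq_real]
    linarith
  calc ‖u' - v'‖ ≤ Real.sqrt ((1 - t * c0) * ‖u - v‖ ^ 2) := Real.le_sqrt_of_sq_le hmain
    _ = Real.sqrt (1 - t * c0) * ‖u - v‖ := by
        rw [Real.sqrt_mul' _ (sq_nonneg _), Real.sqrt_sq (norm_nonneg _)]
end

section
/- Let X be a real Hilbert space and A : X × X → ℝ strongly monotone with constant c0 > 0 and Lipschitz continuous with constant L ≥ c0. Let u ∈ X satisfy A(u,v) = 0 for all v ∈ X, and let (uⁿ)_{n≥0} be a sequence in X satisfying the fixed point iteration (uⁿ, v)_X = (u^{n−1}, v)_X − (c0/L²)·A(u^{n−1}, v) for all v ∈ X and all n ≥ 1. Then ‖u − uⁿ‖_X → 0 as n → ∞, i.e., the sequence (uⁿ) converges to u. -/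
/-!
The iteration is the Banach iteration `u ↦ u - a • A u` (with `A u` identified with its Riesz
representative) for the step `a = c0 / L ^ 2`. With `e` the error before a step and `d` the
increment, `‖e + d‖² = ‖e‖² + 2⟪d, e⟫ + ‖d‖²`; strong monotonicity gives `⟪d, e⟫ ≤ -a c0 ‖e‖²` and
the Lipschitz bound gives `‖d‖ ≤ a L ‖e‖`. Hence the squared error contracts by the factor
`1 - 2 a c0 + a² L² = 1 - c0² / L²`, which lies in `[0, 1)`.
-/

open scoped RealInnerProductSpace

/-- One step contracts the squared error. Here `e` is the current error, `d` the increment and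
`f` the functional `A uⁿ`, which represents `d` up to the factor `-(c0 / L ^ 2)`. -/
lemma norm_sq_error_step_le {X : Type*} [NormedAddCommGroup X] [InnerProductSpace ℝ X]
    {f : X → ℝ} {c0 L : ℝ} (hc0 : 0 < c0) (hL : 0 < L) {e d : X}
    (hd : ∀ v : X, ⟪d, v⟫ = -(c0 / L ^ 2 * f v))
    (hmono : c0 * ‖e‖ ^ 2 ≤ f e) (hlip : ∀ w : X, |f w| ≤ L * ‖e‖ * ‖w‖) :
    ‖e + d‖ ^ 2 ≤ (1 - c0 ^ 2 / L ^ 2) * ‖e‖ ^ 2 := by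
  have ha : 0 < c0 / L ^ 2 := by positivity
  have h1 : ‖d‖ ≤ c0 / L * ‖e‖ := by
    have h2 : ‖d‖ * ‖d‖ ≤ c0 / L * ‖e‖ * ‖d‖ := by
      calc ‖d‖ * ‖d‖ = c0 / L ^ 2 * (-f d) := by
            rw [← real_inner_self_eq_norm_mul_norm, hd d]; ring
        _ ≤ c0 / L ^ 2 * (L * ‖e‖ * ‖d‖) := by
            gcongr
            exact (neg_le_abs _).trans (hlip d)
        _ = c0 / L * ‖e‖ * ‖d‖ := by field_simp
    rcases (norm_nonneg d).eq_or_lt with h0 | h0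
    · rw [← h0]; positivity
    · exact le_of_mul_le_mul_right h2 h0
  have h3 : ⟪e, d⟫ ≤ -(c0 / L ^ 2 * (c0 * ‖e‖ ^ 2)) := by
    rw [real_inner_comm, hd e]
    gcongr
  calc ‖e + d‖ ^ 2 = ‖e‖ ^ 2 + 2 * ⟪e, d⟫ + ‖d‖ ^ 2 := norm_add_sq_real e d
    _ ≤ ‖e‖ ^ 2 + 2 * -(c0 / L ^ 2 * (c0 * ‖e‖ ^ 2)) + (c0 / L * ‖e‖) ^ 2 := by gcongr
    _ = (1 - c0 ^ 2 / L ^ 2) * ‖e‖ ^ 2 := by ring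

/-- Convergence of the fixed point iteration: `‖u - uⁿ‖ → 0` as `n → ∞`,
i.e. the iterates converge to the exact solution `u`. -/
theorem fixed_point_iteration_convergence
    {X : Type*} [NormedAddCommGroup X] [InnerProductSpace ℝ X] [CompleteSpace X]
    (A : X → X → ℝ)
    (hlin : ∀ u : X, IsBoundedLinearMap ℝ (fun v => A u v))
    (c0 L : ℝ) (hc0 : 0 < c0) (hL : c0 ≤ L)
    (hmono : ∀ u v : X, A u (u - v) - A v (u - v) ≥ c0 * ‖u - v‖ ^ 2)
    (hlip : ∀ u v w : X, |A u w - A v w| ≤ L * ‖u - v‖ * ‖w‖)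
    (uex : X) (huex : ∀ v : X, A uex v = 0)
    (u : ℕ → X)
    (hit : ∀ n : ℕ, 1 ≤ n → ∀ v : X,
      ⟪u n, v⟫ = ⟪u (n - 1), v⟫ - (c0 / L ^ 2) * A (u (n - 1)) v) :
    Filter.Tendsto (fun n => ‖uex - u n‖) Filter.atTop (nhds 0) := by
  have hLpos : 0 < L := hc0.trans_le hL
  have hq0 : 0 ≤ 1 - c0 ^ 2 / L ^ 2 := by
    rw [sub_nonneg, div_le_one (by positivity)]
    gcongr
  have hq1 : 1 - c0 ^ 2 / L ^ 2 < 1 := sub_lt_self _ (by positivity)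
  have hstep : ∀ n, ‖u (n + 1) - uex‖ ^ 2 ≤ (1 - c0 ^ 2 / L ^ 2) * ‖u n - uex‖ ^ 2 := by
    intro n
    have h := norm_sq_error_step_le (f := A (u n)) hc0 hLpos (e := u n - uex)
      (d := u (n + 1) - u n)
      (fun v => by
        have h := hit (n + 1) n.succ_pos v
        rw [Nat.add_sub_cancel] at h
        rw [inner_sub_left, h]; ring)
      (by simpa [huex] using hmono (u n) uex)
      (fun w => by simpa [huex] using hlip (u n) uex w)
    rwa [sub_add_sub_cancel'] at h
  have hgeom : ∀ n, ‖u n - uex‖ ^ 2 ≤ (1 - c0 ^ 2 / L ^ 2) ^ n * ‖u 0 - uex‖ ^ 2 := by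
    intro n
    induction n with
    | zero => simp
    | succ n ih =>
      calc _ ≤ _ := hstep n
        _ ≤ _ := mul_le_mul_of_nonneg_left ih hq0
        _ = _ := by ring
  have hsq : Filter.Tendsto (fun n => ‖u n - uex‖ ^ 2) Filter.atTop (nhds 0) := by
    refine squeeze_zero (fun n => by positivity) hgeom ?_
    simpa using (tendsto_pow_atTop_nhds_zero_of_lt_one hq0 hq1).mul_const (‖u 0 - uex‖ ^ 2)
  simpa [norm_sub_rev] using hsq.sqrt
end

section
/- Let X be a real Hilbert space, A : X × X → ℝ strongly monotone with constant c0 > 0 and Lipschitz continuous with constant L ≥ c0, and X_h ⊆ X a closed linear subspace. Let u_h ∈ X_h satisfy A(u_h, v) = 0 for all v ∈ X_h, and let (u_hⁿ)_{n≥0} be a sequence in X_h satisfying (u_hⁿ, v)_X = (u_h^{n−1}, v)_X − (c0/L²)·A(u_h^{n−1}, v) for all v ∈ X_h and all n ≥ 1. Then for every n ≥ 1, ‖u_h − u_hⁿ‖_X ≤ (kⁿ/(1−k))·‖u_h⁰ − u_h¹‖_X, where k = √(1 − (c0/L)²). -/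
open scoped RealInnerProductSpace

/-!
With `t = c0 / L²`, let `w` and `w'` be two consecutive errors. Their difference `w' - w ∈ X_h`
represents the functional `v ↦ -t (A(u_h, v) - A(u_hᵐ, v))` on `X_h`. Testing with `w' - w` and using
Lipschitz continuity gives `‖w' - w‖ ≤ t L ‖w‖`; testing with `w` and using strong monotonicity
gives `⟪w' - w, w⟫ ≤ -t c0 ‖w‖²`. Expanding `‖w + (w' - w)‖²` yields the contraction
`‖w'‖² ≤ (1 - 2 t c0 + t² L²) ‖w‖² = k² ‖w‖²`. Hence the `n`-th error is at most `kⁿ` times the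
initial one, and the initial error is at most `‖u_h⁰ - u_h¹‖ / (1 - k)` by the triangle inequality.
-/

/-- One step of the damped iteration contracts the error. Here `w` is the old error, `d` the
increment, and `B` the difference of the functionals `A(u_h, ·)` and `A(u_hᵐ, ·)`. -/
lemma norm_add_le_contraction {X : Type*} [NormedAddCommGroup X] [InnerProductSpace ℝ X]
    {c0 L : ℝ} (hc0 : 0 < c0) (hL : c0 ≤ L) (w d : X) (B : X → ℝ)
    (hmono : c0 * ‖w‖ ^ 2 ≤ B w) (hlip : |B d| ≤ L * ‖w‖ * ‖d‖)
    (hdw : ⟪d, w⟫ = -(c0 / L ^ 2 * B w)) (hdd : ⟪d, d⟫ = -(c0 / L ^ 2 * B d)) :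
    ‖w + d‖ ≤ √(1 - (c0 / L) ^ 2) * ‖w‖ := by
  have hLpos : 0 < L := hc0.trans_le hL
  have ht : 0 < c0 / L ^ 2 := by positivity
  have hratio : 0 ≤ 1 - (c0 / L) ^ 2 := by
    have h1 : c0 / L ≤ 1 := (div_le_one hLpos).2 hL
    have h0 : 0 ≤ c0 / L := by positivity
    nlinarith
  have hd : ‖d‖ ≤ c0 / L * ‖w‖ := by
    rcases (norm_nonneg d).eq_or_lt with h | h
    · rw [← h]; positivity
    · refine le_of_mul_le_mul_right ?_ h
      calc ‖d‖ * ‖d‖ = c0 / L ^ 2 * -B d := by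
            rw [← real_inner_self_eq_norm_mul_norm, hdd]; ring
        _ ≤ c0 / L ^ 2 * (L * ‖w‖ * ‖d‖) :=
            mul_le_mul_of_nonneg_left ((neg_le_abs _).trans hlip) ht.le
        _ = c0 / L * ‖w‖ * ‖d‖ := by field_simp
  have hd2 : ‖d‖ ^ 2 ≤ (c0 / L * ‖w‖) ^ 2 := pow_le_pow_left₀ (norm_nonneg d) hd 2
  have hB := mul_le_mul_of_nonneg_left hmono ht.le
  have hBeq : c0 / L ^ 2 * (c0 * ‖w‖ ^ 2) = (c0 / L * ‖w‖) ^ 2 := by field_simp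
  refine (sq_le_sq₀ (norm_nonneg _) (by positivity)).1 ?_
  rw [mul_pow, Real.sq_sqrt hratio, norm_add_sq_real, real_inner_comm, hdw]
  linarith [mul_pow (c0 / L) ‖w‖ 2]

/-- A priori bound for the discrete fixed point iteration on a closed subspace `X_h`:
`‖u_h - u_hⁿ‖ ≤ kⁿ/(1-k) ‖u_h⁰ - u_h¹‖` with `k = √(1 - (c0/L)²)`. -/
theorem discrete_fixed_point_iteration_apriori
    {X : Type*} [NormedAddCommGroup X] [InnerProductSpace ℝ X] [CompleteSpace X]
    (A : X → X → ℝ)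
    (hlin : ∀ u : X, IsBoundedLinearMap ℝ (fun v => A u v))
    (c0 L : ℝ) (hc0 : 0 < c0) (hL : c0 ≤ L)
    (hmono : ∀ u v : X, A u (u - v) - A v (u - v) ≥ c0 * ‖u - v‖ ^ 2)
    (hlip : ∀ u v w : X, |A u w - A v w| ≤ L * ‖u - v‖ * ‖w‖)
    (Xh : Submodule ℝ X) (hXh : IsClosed (Xh : Set X))
    (uh : X) (huh : uh ∈ Xh) (huhsol : ∀ v ∈ Xh, A uh v = 0)
    (u : ℕ → X) (humem : ∀ n : ℕ, u n ∈ Xh)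
    (hit : ∀ n : ℕ, 1 ≤ n → ∀ v ∈ Xh,
      ⟪u n, v⟫ = ⟪u (n - 1), v⟫ - (c0 / L ^ 2) * A (u (n - 1)) v) :
    ∀ n : ℕ, 1 ≤ n →
      ‖uh - u n‖ ≤ (Real.sqrt (1 - (c0 / L) ^ 2)) ^ n / (1 - Real.sqrt (1 - (c0 / L) ^ 2))
        * ‖u 0 - u 1‖ := by
  have hLpos : 0 < L := hc0.trans_le hL
  set k := Real.sqrt (1 - (c0 / L) ^ 2) with hk
  have hk0 : 0 ≤ k := Real.sqrt_nonneg _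
  have hk1 : k < 1 := by
    rw [hk, Real.sqrt_lt' one_pos]
    have : 0 < (c0 / L) ^ 2 := by positivity
    linarith
  have hstep (m : ℕ) : ‖uh - u (m + 1)‖ ≤ k * ‖uh - u m‖ := by
    have key : ∀ v ∈ Xh, ⟪u m - u (m + 1), v⟫ = -(c0 / L ^ 2 * (A uh v - A (u m) v)) := by
      intro v hv
      have h := hit (m + 1) (by omega) v hv
      rw [Nat.add_sub_cancel] at h
      rw [inner_sub_left, h, huhsol v hv]
      ring
    have h := norm_add_le_contraction hc0 hL (uh - u m) (u m - u (m + 1))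
      (fun v => A uh v - A (u m) v) (hmono _ _) (hlip _ _ _)
      (key _ (Xh.sub_mem huh (humem m))) (key _ (Xh.sub_mem (humem m) (humem (m + 1))))
    rwa [sub_add_sub_cancel] at h
  have hpow (n : ℕ) : ‖uh - u n‖ ≤ k ^ n * ‖uh - u 0‖ := by
    induction n with
    | zero => simp
    | succ n ih =>
      calc ‖uh - u (n + 1)‖ ≤ k * ‖uh - u n‖ := hstep n
        _ ≤ k * (k ^ n * ‖uh - u 0‖) := mul_le_mul_of_nonneg_left ih hk0
        _ = k ^ (n + 1) * ‖uh - u 0‖ := by ring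
  have hinit : ‖uh - u 0‖ ≤ ‖u 0 - u 1‖ / (1 - k) := by
    rw [le_div_iff₀ (sub_pos.2 hk1)]
    have htri := norm_sub_le_norm_sub_add_norm_sub uh (u 1) (u 0)
    rw [norm_sub_rev (u 1) (u 0)] at htri
    linarith [hstep 0]
  intro n _
  calc ‖uh - u n‖ ≤ k ^ n * ‖uh - u 0‖ := hpow n
    _ ≤ k ^ n * (‖u 0 - u 1‖ / (1 - k)) := mul_le_mul_of_nonneg_left hinit (pow_nonneg hk0 n)
    _ = k ^ n / (1 - k) * ‖u 0 - u 1‖ := by ring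
end

section
/- (A priori error estimate for the iterative Galerkin approximation.) Let X be a real Hilbert space, A : X × X → ℝ strongly monotone with constant c0 > 0 and Lipschitz continuous with constant L ≥ c0, and X_h ⊆ X a closed linear subspace. Let u ∈ X satisfy A(u,v) = 0 for all v ∈ X, and let (u_hⁿ)_{n≥0} be a sequence in X_h satisfying (u_hⁿ, v)_X = (u_h^{n−1}, v)_X − (c0/L²)·A(u_h^{n−1}, v) for all v ∈ X_h and all n ≥ 1. Then for every n ≥ 1 and every v ∈ X_h, ‖u − u_hⁿ‖_X ≤ (L/c0)·‖u − v‖_X + (kⁿ/(1−k))·‖u_h⁰ − u_h¹‖_X, where k = √(1 − (c0/L)²). -/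
/-!
Set `α = c0 / L²`. By the Riesz representation, `A u w = ⟪J u, w⟫`, and an iteration step is the
`Xh`-projection of `u ↦ u - α • J u`. Strong monotonicity and Lipschitz continuity give
`‖d - α • (J u - J v)‖² ≤ (1 - 2 α c0 + α² L²) ‖d‖² = k² ‖d‖²` for `d = u - v`, and projecting does
not increase norms, so successive increments of the iteration shrink by the factor `k < 1`
(`contraction_step`). Hence the sequence converges to some `uh ∈ Xh` with the geometric error bound
`kⁿ / (1 - k) * ‖u 0 - u 1‖`. Passing to the limit in the iteration shows that `uh` solves the
Galerkin problem `A uh w = 0` for `w ∈ Xh`, so it satisfies Céa's quasi-optimality estimate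
(`cea_estimate`). The triangle inequality through `uh` combines the two bounds.
-/

open scoped RealInnerProductSpace

open Filter Topology

/-- One step of the damped iteration contracts: here `p` and `q` are two arguments and
`e` is the difference of their images under the iteration map. The only test vector needed is `e`
itself, which lies in the Galerkin space. -/
lemma contraction_step
    {X : Type*} [NormedAddCommGroup X] [InnerProductSpace ℝ X] [CompleteSpace X]
    (A : X → X → ℝ)
    (hlin : ∀ u : X, IsBoundedLinearMap ℝ (fun v => A u v))
    (c0 L : ℝ) (hc0 : 0 < c0) (hL : c0 ≤ L)
    (hmono : ∀ u v : X, A u (u - v) - A v (u - v) ≥ c0 * ‖u - v‖ ^ 2)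
    (hlip : ∀ u v w : X, |A u w - A v w| ≤ L * ‖u - v‖ * ‖w‖)
    (p q e : X)
    (he : ⟪e, e⟫ = ⟪p - q, e⟫ - (c0 / L ^ 2) * (A p e - A q e)) :
    ‖e‖ ≤ Real.sqrt (1 - (c0 / L) ^ 2) * ‖p - q‖ := by
  have hLpos : 0 < L := hc0.trans_le hL
  obtain ⟨g, hg⟩ : ∃ g : X, ∀ w, ⟪g, w⟫ = A p w - A q w := by
    refine ⟨(InnerProductSpace.toDual ℝ X).symm
      ((hlin p).toContinuousLinearMap - (hlin q).toContinuousLinearMap), fun w => ?_⟩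
    rw [InnerProductSpace.toDual_symm_apply]
    rfl
  have hgnorm : ‖g‖ ≤ L * ‖p - q‖ := by
    have h := (le_abs_self _).trans (hlip p q g)
    rw [← hg, real_inner_self_eq_norm_sq] at h
    by_contra! hlt
    have h0 : 0 < ‖g‖ := lt_of_le_of_lt (by positivity) hlt
    nlinarith
  have hgd : c0 * ‖p - q‖ ^ 2 ≤ ⟪g, p - q⟫ := by
    rw [hg]; exact hmono p q
  set d := p - q with hd
  set α := c0 / L ^ 2 with hα
  have hαpos : 0 < α := by positivity
  -- Testing with `e` itself and Cauchy-Schwarz replace the non-expansiveness of the projection.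
  have hle : ‖e‖ ≤ ‖d - α • g‖ := by
    have h1 : ⟪e, e⟫ = ⟪d - α • g, e⟫ := by
      rw [he, inner_sub_left d, real_inner_smul_left, hg]
    have h2 := real_inner_le_norm (d - α • g) e
    rw [← h1, real_inner_self_eq_norm_sq] at h2
    by_contra! hlt
    have h0 : 0 < ‖e‖ := lt_of_le_of_lt (norm_nonneg _) hlt
    nlinarith
  have hsq : ‖d - α • g‖ ^ 2 ≤ (1 - (c0 / L) ^ 2) * ‖d‖ ^ 2 := by
    have hg2 : ‖g‖ ^ 2 ≤ (L * ‖d‖) ^ 2 := by gcongr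
    have h1 := mul_le_mul_of_nonneg_left hg2 (sq_nonneg α)
    have h2 := mul_le_mul_of_nonneg_left hgd hαpos.le
    have h3 : (1 - (c0 / L) ^ 2) * ‖d‖ ^ 2
        = ‖d‖ ^ 2 - 2 * (α * (c0 * ‖d‖ ^ 2)) + α ^ 2 * (L * ‖d‖) ^ 2 := by
      rw [hα]; field_simp; ring
    rw [norm_sub_sq_real, real_inner_smul_right, real_inner_comm, norm_smul, mul_pow,
      Real.norm_eq_abs, sq_abs, h3]
    linarith
  calc ‖e‖ ≤ ‖d - α • g‖ := hle
    _ ≤ Real.sqrt ((1 - (c0 / L) ^ 2) * ‖d‖ ^ 2) := Real.le_sqrt_of_sq_le hsq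
    _ = Real.sqrt (1 - (c0 / L) ^ 2) * ‖d‖ := by
      rw [Real.sqrt_mul' _ (sq_nonneg _), Real.sqrt_sq (norm_nonneg _)]

/-- Céa's lemma: a Galerkin solution `uh ∈ Xh` is quasi-optimal with constant `L / c0`. -/
lemma cea_estimate
    {X : Type*} [NormedAddCommGroup X] [InnerProductSpace ℝ X]
    (A : X → X → ℝ)
    (hlin : ∀ u : X, IsBoundedLinearMap ℝ (fun v => A u v))
    (c0 L : ℝ) (hc0 : 0 < c0)
    (hmono : ∀ u v : X, A u (u - v) - A v (u - v) ≥ c0 * ‖u - v‖ ^ 2)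
    (hlip : ∀ u v w : X, |A u w - A v w| ≤ L * ‖u - v‖ * ‖w‖)
    (Xh : Submodule ℝ X) (uex : X) (huex : ∀ v : X, A uex v = 0)
    (uh : X) (huh : uh ∈ Xh) (hgal : ∀ w ∈ Xh, A uh w = 0) (v : X) (hv : v ∈ Xh) :
    ‖uex - uh‖ ≤ L / c0 * ‖uex - v‖ := by
  have horth : A uh (uex - uh) = A uh (uex - v) := by
    have h := (hlin uh).map_add (uex - v) (v - uh)
    rw [sub_add_sub_cancel, hgal _ (Xh.sub_mem hv huh), add_zero] at h
    exact h
  have h1 := hmono uex uh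
  have h2 := (le_abs_self _).trans (hlip uex uh (uex - v))
  rw [huex, horth] at h1
  rw [huex] at h2
  have h3 : c0 * ‖uex - uh‖ ^ 2 ≤ L * ‖uex - uh‖ * ‖uex - v‖ := h1.le.trans h2
  rcases (norm_nonneg (uex - uh)).eq_or_lt with h0 | h0
  ·
    -- No sign is assumed on `L`; it is nonnegative unless `uex = v`.
    have h4 := (abs_nonneg _).trans (hlip uex v (uex - v))
    rw [← h0]
    rcases (norm_nonneg (uex - v)).eq_or_lt with h5 | h5
    · simp [← h5]
    · have : 0 ≤ L := by
        by_contra! hneg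
        nlinarith [mul_pos h5 h5]
      positivity
  · rw [div_mul_eq_mul_div, le_div_iff₀ hc0]
    nlinarith

/-- A priori error estimate for the iterative Galerkin approximation:
`‖u - u_hⁿ‖ ≤ (L/c0)·‖u - v‖ + kⁿ/(1-k)·‖u_h⁰ - u_h¹‖` for every `v ∈ X_h` and `n ≥ 1`,
with `k = √(1 - (c0/L)²)`. -/
theorem iterative_galerkin_apriori
    {X : Type*} [NormedAddCommGroup X] [InnerProductSpace ℝ X] [CompleteSpace X]
    (A : X → X → ℝ)
    (hlin : ∀ u : X, IsBoundedLinearMap ℝ (fun v => A u v))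
    (c0 L : ℝ) (hc0 : 0 < c0) (hL : c0 ≤ L)
    (hmono : ∀ u v : X, A u (u - v) - A v (u - v) ≥ c0 * ‖u - v‖ ^ 2)
    (hlip : ∀ u v w : X, |A u w - A v w| ≤ L * ‖u - v‖ * ‖w‖)
    (Xh : Submodule ℝ X) (hXh : IsClosed (Xh : Set X))
    (uex : X) (huex : ∀ v : X, A uex v = 0)
    (u : ℕ → X) (humem : ∀ n : ℕ, u n ∈ Xh)
    (hit : ∀ n : ℕ, 1 ≤ n → ∀ v ∈ Xh,
      ⟪u n, v⟫ = ⟪u (n - 1), v⟫ - (c0 / L ^ 2) * A (u (n - 1)) v) :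
    ∀ n : ℕ, 1 ≤ n → ∀ v ∈ Xh,
      ‖uex - u n‖ ≤ (L / c0) * ‖uex - v‖
        + (Real.sqrt (1 - (c0 / L) ^ 2)) ^ n / (1 - Real.sqrt (1 - (c0 / L) ^ 2))
          * ‖u 0 - u 1‖ := by
  have hLpos : 0 < L := hc0.trans_le hL
  have hk1 : Real.sqrt (1 - (c0 / L) ^ 2) < 1 := by
    rw [Real.sqrt_lt' one_pos]
    have : 0 < (c0 / L) ^ 2 := by positivity
    linarith
  set k := Real.sqrt (1 - (c0 / L) ^ 2) with hk
  have hk0 : 0 ≤ k := Real.sqrt_nonneg _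
  have hstep : ∀ n, ∀ w ∈ Xh, ⟪u (n + 1), w⟫ = ⟪u n, w⟫ - (c0 / L ^ 2) * A (u n) w :=
    fun n w hw => hit (n + 1) (Nat.le_add_left 1 n) w hw
  have hdecay : ∀ n, dist (u n) (u (n + 1)) ≤ ‖u 0 - u 1‖ * k ^ n := by
    intro n
    induction n with
    | zero => simp [dist_eq_norm]
    | succ n ih =>
      have hmem : u (n + 1 + 1) - u (n + 1) ∈ Xh := Xh.sub_mem (humem _) (humem _)
      have h := contraction_step A hlin c0 L hc0 hL hmono hlip (u (n + 1)) (u n)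
        (u (n + 1 + 1) - u (n + 1)) (by
          have ha := hstep (n + 1) _ hmem
          have hb := hstep n _ hmem
          rw [inner_sub_left (u (n + 1 + 1)), inner_sub_left (u (n + 1)) (u n)]
          linarith)
      rw [dist_comm, dist_eq_norm] at ih ⊢
      calc _ ≤ k * ‖u (n + 1) - u n‖ := h
        _ ≤ k * (‖u 0 - u 1‖ * k ^ n) := by gcongr
        _ = ‖u 0 - u 1‖ * k ^ (n + 1) := by ring
  obtain ⟨uh, hlim⟩ := cauchySeq_tendsto_of_complete (cauchySeq_of_le_geometric k _ hk1 hdecay)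
  have huh : uh ∈ Xh := hXh.mem_of_tendsto hlim (Eventually.of_forall humem)
  have hgal : ∀ w ∈ Xh, A uh w = 0 := by
    intro w hw
    have hA : Tendsto (fun n => A (u n) w) atTop (𝓝 (A uh w)) := by
      rw [tendsto_iff_norm_sub_tendsto_zero] at hlim ⊢
      refine squeeze_zero (fun _ => norm_nonneg _) (fun n => hlip (u n) uh w) ?_
      simpa using (hlim.const_mul L).mul_const ‖w‖
    have hin : Tendsto (fun n => ⟪u n, w⟫) atTop (𝓝 ⟪uh, w⟫) := hlim.inner tendsto_const_nhds
    have hfix : ⟪uh, w⟫ = ⟪uh, w⟫ - (c0 / L ^ 2) * A uh w := by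
      refine tendsto_nhds_unique (hin.comp (tendsto_add_atTop_nat 1)) ?_
      refine (hin.sub (hA.const_mul (c0 / L ^ 2))).congr fun n => ?_
      exact (hstep n w hw).symm
    have hα : c0 / L ^ 2 ≠ 0 := by positivity
    have : (c0 / L ^ 2) * A uh w = 0 := by linarith
    exact (mul_eq_zero.mp this).resolve_left hα
  intro n _ v hv
  have hcea := cea_estimate A hlin c0 L hc0 hmono hlip Xh uex huex uh huh hgal v hv
  have hgeo := dist_le_of_le_geometric_of_tendsto k _ hk1 hdecay hlim n
  rw [dist_comm, dist_eq_norm] at hgeo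
  calc ‖uex - u n‖ ≤ ‖uex - uh‖ + ‖uh - u n‖ := norm_sub_le_norm_sub_add_norm_sub _ _ _
    _ ≤ L / c0 * ‖uex - v‖ + ‖u 0 - u 1‖ * k ^ n / (1 - k) := add_le_add hcea hgeo
    _ = L / c0 * ‖uex - v‖ + k ^ n / (1 - k) * ‖u 0 - u 1‖ := by ring
end

section
/- (A posteriori error estimate for the iterative Galerkin approximation.) Let X be a real Hilbert space, A : X × X → ℝ strongly monotone with constant c0 > 0 and Lipschitz continuous with constant L > 0, and X_h ⊆ X a linear subspace. Let u ∈ X satisfy A(u,v) = 0 for all v ∈ X. Let u_h^{n−1}, u_hⁿ ∈ X_h satisfy (u_hⁿ, v)_X = (u_h^{n−1}, v)_X − (c0/L²)·A(u_h^{n−1}, v) for all v ∈ X_h, and let ũⁿ ∈ X satisfy (ũⁿ, v)_X = (u_h^{n−1}, v)_X − (c0/L²)·A(u_h^{n−1}, v) for all v ∈ X. If η ∈ ℝ satisfies ‖ũⁿ − u_hⁿ‖_X ≤ η, then ‖u − u_hⁿ‖_X ≤ (L/c0)·(1 + L/c0)·‖u_hⁿ − u_h^{n−1}‖_X + (L²/c0²)·η.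 -/
/-!
Strong monotonicity, tested with the error `e = u - u_hⁿ`, bounds `c0‖e‖²` by `-A(u_hⁿ, e)`,
which splits as `(A(u_h^{n-1}, e) - A(u_hⁿ, e)) - A(u_h^{n-1}, e)`. The first difference is
controlled by Lipschitz continuity. The remaining term equals `(L²/c0)(ũⁿ - u_h^{n-1}, e)` by the
equation defining the reconstruction, and
`‖ũⁿ - u_h^{n-1}‖ ≤ η + ‖u_hⁿ - u_h^{n-1}‖`. Dividing by `c0‖e‖` gives the estimate.
-/

open scoped RealInnerProductSpace

/-- A posteriori error estimate for the iterative Galerkin approximation: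
if `‖ũⁿ - u_hⁿ‖ ≤ η`, then
`‖u - u_hⁿ‖ ≤ (L/c0)(1 + L/c0)·‖u_hⁿ - u_h^{n-1}‖ + (L²/c0²)·η`. -/
theorem iterative_galerkin_aposteriori
    {X : Type*} [NormedAddCommGroup X] [InnerProductSpace ℝ X] [CompleteSpace X]
    (A : X → X → ℝ)
    (hlin : ∀ u : X, IsBoundedLinearMap ℝ (fun v => A u v))
    (c0 L : ℝ) (hc0 : 0 < c0) (hL : 0 < L)
    (hmono : ∀ u v : X, A u (u - v) - A v (u - v) ≥ c0 * ‖u - v‖ ^ 2)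
    (hlip : ∀ u v w : X, |A u w - A v w| ≤ L * ‖u - v‖ * ‖w‖)
    (Xh : Submodule ℝ X)
    (u : X) (hu : ∀ v : X, A u v = 0)
    (uhprev uhn : X) (hprevmem : uhprev ∈ Xh) (hnmem : uhn ∈ Xh)
    (hit : ∀ v ∈ Xh, ⟪uhn, v⟫ = ⟪uhprev, v⟫ - (c0 / L ^ 2) * A uhprev v)
    (utilde : X)
    (hutilde : ∀ v : X, ⟪utilde, v⟫ = ⟪uhprev, v⟫ - (c0 / L ^ 2) * A uhprev v)
    (η : ℝ) (hη : ‖utilde - uhn‖ ≤ η) :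
    ‖u - uhn‖ ≤ (L / c0) * (1 + L / c0) * ‖uhn - uhprev‖ + (L ^ 2 / c0 ^ 2) * η := by
  set e := u - uhn with he
  have hmono' := hmono u uhn
  rw [hu, ← he] at hmono'
  have hlip' := (le_abs_self _).trans (hlip uhprev uhn e)
  rw [norm_sub_rev uhprev uhn] at hlip'
  -- `-A(u_h^{n-1}, ·)` is represented by `(L²/c0)(ũⁿ - u_h^{n-1})`.
  have hrep : -A uhprev e = L ^ 2 / c0 * ⟪utilde - uhprev, e⟫ := by
    rw [inner_sub_left, hutilde]
    field_simp
    ring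
  have hcs : ⟪utilde - uhprev, e⟫ ≤ (‖uhn - uhprev‖ + η) * ‖e‖ := by
    refine (real_inner_le_norm _ _).trans ?_
    gcongr
    have := norm_sub_le_norm_sub_add_norm_sub utilde uhn uhprev
    linarith
  have hcs' := mul_le_mul_of_nonneg_left hcs (show 0 ≤ L ^ 2 / c0 by positivity)
  have hη0 : 0 ≤ η := (norm_nonneg _).trans hη
  rcases (norm_nonneg e).eq_or_lt with h0 | hpos
  · rw [← h0]
    positivity
  · have key : c0 * ‖e‖ ≤ L * ‖uhn - uhprev‖ + L ^ 2 / c0 * (‖uhn - uhprev‖ + η) := by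
      refine le_of_mul_le_mul_right ?_ hpos
      linarith
    have hrhs : (L / c0) * (1 + L / c0) * ‖uhn - uhprev‖ + (L ^ 2 / c0 ^ 2) * η
        = (L * ‖uhn - uhprev‖ + L ^ 2 / c0 * (‖uhn - uhprev‖ + η)) / c0 := by
      field_simp
      ring
    rw [hrhs, le_div_iff₀ hc0]
    linarith
end

section
/- (Liu's strong monotonicity inequality.) Let μ : [0,∞) → ℝ and let α1 ≥ α2 > 0 be constants such that α2(t−s) ≤ μ(t)·t − μ(s)·s ≤ α1(t−s) for all t ≥ s ≥ 0. Then for all vectors v, w ∈ ℝ², (μ(|v|)·v − μ(|w|)·w)·(v − w) ≥ α2·|v − w|², where · denotes the Euclidean inner product and |·| the Euclidean norm on ℝ². -/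
open scoped RealInnerProductSpace

/-!
Put `κ = μ - α2`. The lower bound in the hypothesis says that `t ↦ κ(t) t` is nondecreasing on
`[0, ∞)`; it vanishes at `0`, so it is nonnegative. Expanding, the claim becomes
`κ(|v|)|v|² + κ(|w|)|w|² - (κ(|v|) + κ(|w|)) v·w ≥ 0`. By Cauchy–Schwarz the left side is at least
`(κ(|v|)|v| - κ(|w|)|w|)(|v| - |w|)`, which is nonnegative by monotonicity.
-/

/-- Cauchy–Schwarz multiplied by a factor `k`. Only `0 ≤ k * ‖v‖` is needed: the sign of `k` is
undetermined when `v = 0`, but then both sides vanish. -/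
lemma mul_inner_le_of_mul_norm_nonneg {E : Type*} [NormedAddCommGroup E] [InnerProductSpace ℝ E]
    {k : ℝ} (v w : E) (hk : 0 ≤ k * ‖v‖) : k * ⟪v, w⟫ ≤ k * (‖v‖ * ‖w‖) := by
  rcases eq_or_ne v 0 with rfl | hv
  · simp
  · exact mul_le_mul_of_nonneg_left (real_inner_le_norm v w)
      (nonneg_of_mul_nonneg_left hk (norm_pos_iff.mpr hv))

/-- Liu's strong monotonicity inequality: if `α2(t-s) ≤ μ(t)t - μ(s)s ≤ α1(t-s)` for all
`t ≥ s ≥ 0`, then `(μ(|v|)v - μ(|w|)w)·(v - w) ≥ α2|v - w|²` for all `v, w ∈ ℝ²`. -/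
theorem liu_strong_monotonicity
    (μ : ℝ → ℝ) (α1 α2 : ℝ) (hα : α1 ≥ α2) (hα2 : 0 < α2)
    (hμ : ∀ s t : ℝ, 0 ≤ s → s ≤ t →
      α2 * (t - s) ≤ μ t * t - μ s * s ∧ μ t * t - μ s * s ≤ α1 * (t - s))
    (v w : EuclideanSpace ℝ (Fin 2)) :
    ⟪μ ‖v‖ • v - μ ‖w‖ • w, v - w⟫ ≥ α2 * ‖v - w‖ ^ 2 := by
  have hpos : ∀ x : EuclideanSpace ℝ (Fin 2), 0 ≤ (μ ‖x‖ - α2) * ‖x‖ := fun x => by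
    have := (hμ 0 ‖x‖ le_rfl (norm_nonneg x)).1
    linarith
  have hv := mul_inner_le_of_mul_norm_nonneg v w (hpos v)
  have hw := mul_inner_le_of_mul_norm_nonneg w v (hpos w)
  rw [real_inner_comm] at hw
  have hmono : 0 ≤ ((μ ‖v‖ - α2) * ‖v‖ - (μ ‖w‖ - α2) * ‖w‖) * (‖v‖ - ‖w‖) := by
    rcases le_total ‖w‖ ‖v‖ with h | h
    · have := (hμ ‖w‖ ‖v‖ (norm_nonneg w) h).1
      exact mul_nonneg (by linarith) (by linarith)
    · have := (hμ ‖v‖ ‖w‖ (norm_nonneg v) h).1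
      exact mul_nonneg_of_nonpos_of_nonpos (by linarith) (by linarith)
  rw [norm_sub_sq_real]
  simp only [inner_sub_left, inner_sub_right, real_inner_smul_left, real_inner_self_eq_norm_sq]
  rw [real_inner_comm v w]
  linarith
end

section
/- (Liu's Lipschitz inequality.) Let μ : [0,∞) → ℝ and let α1 ≥ α2 > 0 be constants such that α2(t−s) ≤ μ(t)·t − μ(s)·s ≤ α1(t−s) for all t ≥ s ≥ 0. Then for all vectors v, w ∈ ℝ², |μ(|v|)·v − μ(|w|)·w| ≤ α1·|v − w|, where |·| denotes the Euclidean norm on ℝ². -/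
/-!
With `a = ‖v‖`, `b = ‖w‖`, `d = a b - ⟪v, w⟫ ≥ 0` (Cauchy–Schwarz), polarization gives
`‖μ(a) v - μ(b) w‖² = (μ(a) a - μ(b) b)² + 2 μ(a) μ(b) d` and `‖v - w‖² = (a - b)² + 2 d`.
The monotonicity condition bounds the first summand by `α1² (a - b)²`, and, taken with `s = 0`, yields
`0 ≤ μ(a), μ(b) ≤ α1` when `a, b > 0`, which bounds the second by `2 α1² d`. If `v` or `w` vanishes, the value `μ 0` is
unconstrained, but then `d = 0` and the second summand disappears.
-/

open scoped RealInnerProductSpace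

/-- Splits the squared distance of two rescaled vectors into a radial part and an angular part. -/
lemma norm_smul_sub_smul_sq {E : Type*} [NormedAddCommGroup E] [InnerProductSpace ℝ E]
    (p q : ℝ) (v w : E) :
    ‖p • v - q • w‖ ^ 2 =
      (p * ‖v‖ - q * ‖w‖) ^ 2 + 2 * (p * q) * (‖v‖ * ‖w‖ - inner ℝ v w) := by
  rw [norm_sub_sq_real, norm_smul, norm_smul, real_inner_smul_left, real_inner_smul_right,
    mul_pow, mul_pow, Real.norm_eq_abs, Real.norm_eq_abs, sq_abs, sq_abs]
  ring

/-- Liu's Lipschitz inequality: if `α2(t-s) ≤ μ(t)t - μ(s)s ≤ α1(t-s)` for all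
`t ≥ s ≥ 0`, then `|μ(|v|)v - μ(|w|)w| ≤ α1|v - w|` for all `v, w ∈ ℝ²`. -/
theorem liu_lipschitz
    (μ : ℝ → ℝ) (α1 α2 : ℝ) (hα : α1 ≥ α2) (hα2 : 0 < α2)
    (hμ : ∀ s t : ℝ, 0 ≤ s → s ≤ t →
      α2 * (t - s) ≤ μ t * t - μ s * s ∧ μ t * t - μ s * s ≤ α1 * (t - s))
    (v w : EuclideanSpace ℝ (Fin 2)) :
    ‖μ ‖v‖ • v - μ ‖w‖ • w‖ ≤ α1 * ‖v - w‖ := by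
  have hα1 : 0 < α1 := lt_of_lt_of_le hα2 hα
  have bounds : ∀ t : ℝ, 0 < t → 0 ≤ μ t ∧ μ t ≤ α1 := by
    intro t ht
    obtain ⟨h1, h2⟩ := hμ 0 t le_rfl ht.le
    simp only [mul_zero, sub_zero] at h1 h2
    exact ⟨hα2.le.trans (le_of_mul_le_mul_right h1 ht), le_of_mul_le_mul_right h2 ht⟩
  have radial_le : ∀ s t : ℝ, 0 ≤ s → s ≤ t →
      (μ t * t - μ s * s) ^ 2 ≤ α1 ^ 2 * (t - s) ^ 2 := by
    intro s t hs hst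
    obtain ⟨h1, h2⟩ := hμ s t hs hst
    have h0 : 0 ≤ μ t * t - μ s * s := (mul_nonneg hα2.le (sub_nonneg.2 hst)).trans h1
    rw [← mul_pow]
    exact pow_le_pow_left₀ h0 h2 2
  have radial : (μ ‖v‖ * ‖v‖ - μ ‖w‖ * ‖w‖) ^ 2 ≤ α1 ^ 2 * (‖v‖ - ‖w‖) ^ 2 := by
    rcases le_total ‖w‖ ‖v‖ with h | h
    · exact radial_le _ _ (norm_nonneg w) h
    · rw [sub_sq_comm, sub_sq_comm ‖v‖]
      exact radial_le _ _ (norm_nonneg v) h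
  have angular : (μ ‖v‖ * μ ‖w‖) * (‖v‖ * ‖w‖ - inner ℝ v w) ≤
      α1 ^ 2 * (‖v‖ * ‖w‖ - inner ℝ v w) := by
    rcases eq_or_ne v 0 with rfl | hv
    · simp
    rcases eq_or_ne w 0 with rfl | hw
    · simp
    obtain ⟨-, hp⟩ := bounds _ (norm_pos_iff.2 hv)
    obtain ⟨hq0, hq⟩ := bounds _ (norm_pos_iff.2 hw)
    rw [sq]
    exact mul_le_mul_of_nonneg_right (mul_le_mul hp hq hq0 hα1.le)
      (sub_nonneg.2 (real_inner_le_norm v w))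
  refine (pow_le_pow_iff_left₀ (norm_nonneg _) (by positivity) two_ne_zero).1 ?_
  have hsub := norm_smul_sub_smul_sq 1 1 v w
  simp only [one_smul, one_mul] at hsub
  rw [mul_pow, hsub, norm_smul_sub_smul_sq]
  linarith
end

section
/- (Integrated strong monotonicity of the nonlinear diffusion term.) Let (Ω, m) be a measure space, α1 ≥ α2 > 0 constants, and μ : Ω × [0,∞) → ℝ such that for every x ∈ Ω, α2(t−s) ≤ μ(x,t)·t − μ(x,s)·s ≤ α1(t−s) for all t ≥ s ≥ 0. Let g, h : Ω → ℝ² be measurable functions such that x ↦ (μ(x,|g(x)|)·g(x) − μ(x,|h(x)|)·h(x))·(g(x) − h(x)) is measurable and x ↦ |g(x) − h(x)|² is integrable with respect to m. Then the integrand x ↦ (μ(x,|g(x)|)·g(x) − μ(x,|h(x)|)·h(x))·(g(x) − h(x)) is integrable and ∫_Ω (μ(x,|g(x)|)·g(x) − μ(x,|h(x)|)·h(x))·(g(x) − h(x)) dm(x) ≥ α2·∫_Ω |g(x) − h(x)|² dm(x). -/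
/-!
The estimate is pointwise. If `t ↦ ν t * t` is nondecreasing on `[0, ∞)`, then it is nonnegative
there, and expanding the inner product and using Cauchy–Schwarz gives
`⟪ν ‖y‖ • y - ν ‖z‖ • z, y - z⟫ ≥ (ν ‖y‖ * ‖y‖ - ν ‖z‖ * ‖z‖) * (‖y‖ - ‖z‖) ≥ 0`
(`inner_smul_sub_smul_nonneg`, `inner_radial_nonneg`). The hypothesis on `μ` says exactly that
`ν = μ x - α2` and `ν = α1 - μ x` both have this property, so the integrand `F` satisfies
`α2 * ‖g - h‖ ^ 2 ≤ F ≤ α1 * ‖g - h‖ ^ 2`. This gives integrability by domination and the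
lower bound by monotonicity of the integral.
-/

open scoped RealInnerProductSpace
open MeasureTheory

section Pointwise

variable {E : Type*} [NormedAddCommGroup E] [InnerProductSpace ℝ E]

theorem inner_smul_sub_smul_nonneg (a b : ℝ) (y z : E) (ha : 0 ≤ a * ‖y‖) (hb : 0 ≤ b * ‖z‖)
    (hab : 0 ≤ (a * ‖y‖ - b * ‖z‖) * (‖y‖ - ‖z‖)) :
    0 ≤ ⟪a • y - b • z, y - z⟫ := by
  have hexp : ⟪a • y - b • z, y - z⟫ = a * ‖y‖ ^ 2 + b * ‖z‖ ^ 2 - (a + b) * ⟪y, z⟫ := by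
    simp only [inner_sub_left, inner_sub_right, real_inner_smul_left,
      real_inner_self_eq_norm_sq, real_inner_comm y z]
    ring
  rw [hexp]
  -- The sign of `a` (resp. `b`) is only known when `y ≠ 0` (resp. `z ≠ 0`).
  rcases eq_or_ne y 0 with rfl | hy
  · simp only [norm_zero, inner_zero_left]
    nlinarith [mul_nonneg hb (norm_nonneg z)]
  rcases eq_or_ne z 0 with rfl | hz
  · simp only [norm_zero, inner_zero_right]
    nlinarith [mul_nonneg ha (norm_nonneg y)]
  have ha' : 0 ≤ a := nonneg_of_mul_nonneg_left ha (norm_pos_iff.mpr hy)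
  have hb' : 0 ≤ b := nonneg_of_mul_nonneg_left hb (norm_pos_iff.mpr hz)
  nlinarith [mul_le_mul_of_nonneg_left (real_inner_le_norm y z) (add_nonneg ha' hb')]

/-- The radial field `y ↦ ν ‖y‖ • y` is monotone when its profile `t ↦ ν t * t` is
nondecreasing on `[0, ∞)`. -/
theorem inner_radial_nonneg (ν : ℝ → ℝ)
    (hν : ∀ s t : ℝ, 0 ≤ s → s ≤ t → ν s * s ≤ ν t * t) (y z : E) :
    0 ≤ ⟪ν ‖y‖ • y - ν ‖z‖ • z, y - z⟫ := by
  have hnn : ∀ t : ℝ, 0 ≤ t → 0 ≤ ν t * t := fun t ht => by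
    simpa using hν 0 t le_rfl ht
  refine inner_smul_sub_smul_nonneg _ _ y z (hnn _ (norm_nonneg y)) (hnn _ (norm_nonneg z)) ?_
  rcases le_total ‖y‖ ‖z‖ with hyz | hyz
  · exact mul_nonneg_of_nonpos_of_nonpos
      (sub_nonpos.mpr (hν _ _ (norm_nonneg y) hyz)) (sub_nonpos.mpr hyz)
  · exact mul_nonneg (sub_nonneg.mpr (hν _ _ (norm_nonneg z) hyz)) (sub_nonneg.mpr hyz)

/-- Strong monotonicity and the matching upper bound for a radial field whose profile has
increments between `α2 * (t - s)` and `α1 * (t - s)`. -/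
theorem inner_radial_bounds (ν : ℝ → ℝ) (α1 α2 : ℝ)
    (hν : ∀ s t : ℝ, 0 ≤ s → s ≤ t →
      α2 * (t - s) ≤ ν t * t - ν s * s ∧ ν t * t - ν s * s ≤ α1 * (t - s)) (y z : E) :
    α2 * ‖y - z‖ ^ 2 ≤ ⟪ν ‖y‖ • y - ν ‖z‖ • z, y - z⟫ ∧
      ⟪ν ‖y‖ • y - ν ‖z‖ • z, y - z⟫ ≤ α1 * ‖y - z‖ ^ 2 := by
  constructor
  · have key := inner_radial_nonneg (fun t => ν t - α2)
      (fun s t hs hst => by linarith [(hν s t hs hst).1]) y z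
    have heq : (ν ‖y‖ - α2) • y - (ν ‖z‖ - α2) • z
        = (ν ‖y‖ • y - ν ‖z‖ • z) - α2 • (y - z) := by module
    simp only [heq] at key
    rw [inner_sub_left, real_inner_smul_left, real_inner_self_eq_norm_sq] at key
    linarith
  · have key := inner_radial_nonneg (fun t => α1 - ν t)
      (fun s t hs hst => by linarith [(hν s t hs hst).2]) y z
    have heq : (α1 - ν ‖y‖) • y - (α1 - ν ‖z‖) • z
        = α1 • (y - z) - (ν ‖y‖ • y - ν ‖z‖ • z) := by module
    simp only [heq] at key
    rw [inner_sub_left, real_inner_smul_left, real_inner_self_eq_norm_sq] at key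
    linarith

end Pointwise

/-- Integrated strong monotonicity of the nonlinear diffusion term: the integrand
`x ↦ (μ(x,|g(x)|)g(x) - μ(x,|h(x)|)h(x))·(g(x) - h(x))` is integrable and its integral
is bounded below by `α2 ∫ |g - h|²`. -/
theorem integrated_strong_monotonicity
    {Ω : Type*} [MeasurableSpace Ω] (m : Measure Ω)
    (μ : Ω → ℝ → ℝ) (α1 α2 : ℝ) (hα : α1 ≥ α2) (hα2 : 0 < α2)
    (hμ : ∀ x : Ω, ∀ s t : ℝ, 0 ≤ s → s ≤ t →
      α2 * (t - s) ≤ μ x t * t - μ x s * s ∧ μ x t * t - μ x s * s ≤ α1 * (t - s))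
    (g h : Ω → EuclideanSpace ℝ (Fin 2))
    (hg : Measurable g) (hh : Measurable h)
    (hFmeas : Measurable (fun x => ⟪μ x ‖g x‖ • g x - μ x ‖h x‖ • h x, g x - h x⟫))
    (hint : Integrable (fun x => ‖g x - h x‖ ^ 2) m) :
    Integrable (fun x => ⟪μ x ‖g x‖ • g x - μ x ‖h x‖ • h x, g x - h x⟫) m ∧
      ∫ x, ⟪μ x ‖g x‖ • g x - μ x ‖h x‖ • h x, g x - h x⟫ ∂m
        ≥ α2 * ∫ x, ‖g x - h x‖ ^ 2 ∂m := by
  have hb := fun x => inner_radial_bounds (μ x) α1 α2 (hμ x) (g x) (h x)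
  have hF : Integrable (fun x => ⟪μ x ‖g x‖ • g x - μ x ‖h x‖ • h x, g x - h x⟫) m := by
    refine (hint.const_mul α1).mono' hFmeas.aestronglyMeasurable (ae_of_all _ fun x => ?_)
    rw [Real.norm_of_nonneg (le_trans (by positivity) (hb x).1)]
    exact (hb x).2
  refine ⟨hF, ?_⟩
  rw [ge_iff_le, ← integral_const_mul]
  exact integral_mono (hint.const_mul α2) hF fun x => (hb x).1
end

section
/- (Optimal Lipschitz constant, case α1/α2 < β1/β2.) Let α1 ≥ α2 > 0, β1 ≥ β2 > 0, and C > 0 be real constants, and for δ ∈ [0, β1] define L(δ) = max((α1 + δ·C²)/α2, (β1 − δ)/β2). If α1/α2 < β1/β2, then δ* := (β1·α2 − β2·α1)/(α2 + β2·C²) satisfies 0 < δ* < β1, L(δ*) = (α1 + β1·C²)/(α2 + β2·C²), L(δ*) ≥ 1, and L(δ*) ≤ L(δ) for every δ ∈ [0, β1]; i.e., δ* minimizes L over [0, β1]. -/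
/-!
Write `K = C ^ 2`. The two branches of `L` are affine in `δ`, one increasing and one decreasing, and
they cross at `δ*`, where both equal `M = (α1 + β1 * K) / (α2 + β2 * K)`. For every `δ`,
the identity `(α1 + δ * K) + K * (β1 - δ) = α1 + β1 * K` exhibits `M` as the average of the two
branches with weights proportional to `α2` and `β2 * K`, so `M` is at most their maximum `L δ`.
-/

/-- Optimal Lipschitz constant, case `α1/α2 < β1/β2`: with
`L(δ) = max((α1 + δC²)/α2, (β1 - δ)/β2)`, the choice
`δ* = (β1α2 - β2α1)/(α2 + β2C²)` satisfies `0 < δ* < β1`,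
`L(δ*) = (α1 + β1C²)/(α2 + β2C²) ≥ 1`, and `δ*` minimizes `L` over `[0, β1]`. -/
theorem optimal_lipschitz_constant_case_two
    (α1 α2 β1 β2 C : ℝ)
    (hα : α1 ≥ α2) (hα2 : 0 < α2) (hβ : β1 ≥ β2) (hβ2 : 0 < β2) (hC : 0 < C)
    (L : ℝ → ℝ) (hL : ∀ δ, L δ = max ((α1 + δ * C ^ 2) / α2) ((β1 - δ) / β2))
    (hcase : α1 / α2 < β1 / β2) :
    0 < (β1 * α2 - β2 * α1) / (α2 + β2 * C ^ 2) ∧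
      (β1 * α2 - β2 * α1) / (α2 + β2 * C ^ 2) < β1 ∧
      L ((β1 * α2 - β2 * α1) / (α2 + β2 * C ^ 2))
        = (α1 + β1 * C ^ 2) / (α2 + β2 * C ^ 2) ∧
      L ((β1 * α2 - β2 * α1) / (α2 + β2 * C ^ 2)) ≥ 1 ∧
      ∀ δ ∈ Set.Icc (0 : ℝ) β1,
        L ((β1 * α2 - β2 * α1) / (α2 + β2 * C ^ 2)) ≤ L δ := by
  have hK : 0 < C ^ 2 := by positivity
  have hD : 0 < α2 + β2 * C ^ 2 := by positivity
  rw [div_lt_div_iff₀ hα2 hβ2] at hcase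
  have hval : L ((β1 * α2 - β2 * α1) / (α2 + β2 * C ^ 2))
      = (α1 + β1 * C ^ 2) / (α2 + β2 * C ^ 2) := by
    have h1 : (α1 + (β1 * α2 - β2 * α1) / (α2 + β2 * C ^ 2) * C ^ 2) / α2
        = (α1 + β1 * C ^ 2) / (α2 + β2 * C ^ 2) := by
      field_simp
      ring
    have h2 : (β1 - (β1 * α2 - β2 * α1) / (α2 + β2 * C ^ 2)) / β2
        = (α1 + β1 * C ^ 2) / (α2 + β2 * C ^ 2) := by
      field_simp
      ring
    rw [hL, h1, h2, max_self]
  refine ⟨div_pos (by linarith) hD, ?_, hval, ?_, ?_⟩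
  · rw [div_lt_iff₀ hD]
    have h1 : 0 < β2 * α1 := mul_pos hβ2 (by linarith)
    have h2 : 0 < β1 * (β2 * C ^ 2) := mul_pos (by linarith) (by positivity)
    linarith
  · rw [hval, ge_iff_le, one_le_div hD]
    gcongr
  · intro δ _
    rw [hval, div_le_iff₀ hD]
    have h1 : (α1 + δ * C ^ 2) / α2 ≤ L δ := hL δ ▸ le_max_left _ _
    have h2 : (β1 - δ) / β2 ≤ L δ := hL δ ▸ le_max_right _ _
    rw [div_le_iff₀ hα2] at h1
    rw [div_le_iff₀ hβ2] at h2
    -- Adding `h1` to `C ^ 2` times `h2` cancels `δ`.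
    linarith [mul_le_mul_of_nonneg_right h2 hK.le]
end
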